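/- arXiv:1509.05724 — 3 statements merged into one kernel-verified Lean document; each statement's English description precedes it below -/
import Mathlib

section
/- Let n ≥ 3, let s > 2 and t > 2, and let μ, ν be nonzero finite Borel measures on ℝⁿ with compact support such that I_s(μ) < ∞ and I_t(ν) < ∞. Then the set of unit vectors e ∈ S^{n−1} for which the set π_e(spt μ) ∩ π_e(spt ν) ⊆ ℝ has non-empty interior has positive (n−1)-dimensional Hausdorff measure in S^{n−1}. -/
open MeasureTheory Metric Set
open scoped ENNReal RealInnerProductSpace

/-- The topological support of a measure: points all of whose neighbourhoods
have positive measure. -/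
def sptm (n : ℕ) (μ : MeasureTheory.Measure (EuclideanSpace ℝ (Fin n))) :
    Set (EuclideanSpace ℝ (Fin n)) :=
  {x | ∀ r > 0, 0 < μ (Metric.ball x r)}

/-- The `s`-energy `I_s(μ) = ∬ |x-y|^{-s} dμ(x) dμ(y)` of a measure. -/
noncomputable def energyI (n : ℕ) (s : ℝ)
    (μ : MeasureTheory.Measure (EuclideanSpace ℝ (Fin n))) : ℝ≥0∞ :=
  ∫⁻ x, ∫⁻ y, (‖x - y‖₊ : ℝ≥0∞) ^ (-s) ∂μ ∂μ

open scoped FourierTransform Pointwise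

/-- A Gaussian measure, up to normalisation. -/
lemma exists_gaussian_measure (E : Type*) [NormedAddCommGroup E] [InnerProductSpace ℝ E]
    [FiniteDimensional ℝ E] [MeasurableSpace E] [BorelSpace E] :
    ∃ γ : Measure E, IsFiniteMeasure γ ∧ γ ≪ volume ∧ ∃ K : ℝ, 0 < K ∧
      ∀ x, charFun γ x = (K * Real.exp (-‖x‖ ^ 2 / 2) : ℝ) := by
  have hint : Integrable (fun v : E ↦ Real.exp (-(1 / 2) * ‖v‖ ^ 2)) := by
    have := (GaussianFourier.integrable_cexp_neg_mul_sq_norm_add (V := E) (b := 1 / 2)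
      (by norm_num) 0 0).norm
    refine this.congr (.of_forall fun v ↦ ?_)
    simp only [zero_mul, add_zero, Complex.norm_exp]
    congr 1
    have : (-(1 / 2) * (‖v‖ : ℂ) ^ 2) = ((-(1 / 2) * ‖v‖ ^ 2 : ℝ) : ℂ) := by push_cast; ring
    rw [this, Complex.ofReal_re]
  refine ⟨volume.withDensity fun v ↦ ENNReal.ofReal (Real.exp (-(1 / 2) * ‖v‖ ^ 2)),
    isFiniteMeasure_withDensity_ofReal hint.2, withDensity_absolutelyContinuous _ _,
    (Real.pi / (1 / 2)) ^ (Module.finrank ℝ E / 2 : ℝ), by positivity, fun x ↦ ?_⟩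
  rw [charFun_apply, integral_withDensity_eq_integral_toReal_smul (by fun_prop) (by simp)]
  have key := GaussianFourier.integral_cexp_neg_mul_sq_norm_add (V := E) (b := 1 / 2)
    (by norm_num) Complex.I x
  convert key using 1
  · refine integral_congr_ae (.of_forall fun v ↦ ?_)
    simp only
    rw [ENNReal.toReal_ofReal (Real.exp_pos _).le, Complex.real_smul, Complex.ofReal_exp,
      ← Complex.exp_add, real_inner_comm]
    congr 1
    push_cast
    ring
  · rw [Complex.ofReal_mul, Complex.ofReal_cpow (by positivity), Complex.ofReal_exp]
    congr 2
    · push_cast; rfl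
    · push_cast; rfl
    · push_cast
      rw [Complex.I_sq]
      ring

/-- Integrating Gaussians of all widths produces the Riesz kernel. -/
lemma lintegral_rpow_mul_gaussian_le (E : Type*) [NormedAddCommGroup E] [NormedSpace ℝ E]
    {s K : ℝ} (hs : 0 < s) (hK : 0 < K) :
    ∃ C : ℝ, 0 < C ∧ ∀ z : E, ∫⁻ t : ℝ, ENNReal.ofReal (|t| ^ (s - 1)) *
      ENNReal.ofReal (K * Real.exp (-‖t • z‖ ^ 2 / 2)) ≤
        ENNReal.ofReal C * (‖z‖₊ : ℝ≥0∞) ^ (-s) := by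
  refine ⟨2 * K * ((1 / 2 : ℝ) ^ (-s / 2) * (1 / 2) * Real.Gamma (s / 2)), ?_, fun z ↦ ?_⟩
  · have := Real.Gamma_pos_of_pos (half_pos hs)
    positivity
  rcases eq_or_ne z 0 with rfl | hz
  · simp only [nnnorm_zero, ENNReal.coe_zero, ENNReal.zero_rpow_of_neg (neg_lt_zero.2 hs)]
    rw [ENNReal.mul_top]
    · exact le_top
    · have := Real.Gamma_pos_of_pos (half_pos hs)
      exact (ENNReal.ofReal_pos.2 (by positivity)).ne'
  have hz0 : 0 < ‖z‖ := norm_pos_iff.2 hz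
  have hΓ := Real.Gamma_pos_of_pos (half_pos hs)
  have hval : ∫ t : ℝ, |t| ^ (s - 1) * (K * Real.exp (-‖t • z‖ ^ 2 / 2)) =
      2 * K * ((1 / 2 : ℝ) ^ (-s / 2) * (1 / 2) * Real.Gamma (s / 2)) * ‖z‖ ^ (-s) := by
    have h1 := integral_comp_abs
      (f := fun t ↦ t ^ (s - 1) * (K * Real.exp (-(t ^ 2 * ‖z‖ ^ 2) / 2)))
    have h2 := integral_rpow_mul_exp_neg_mul_rpow (p := 2) (q := s - 1) (b := ‖z‖ ^ 2 / 2)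
      (by norm_num) (by linarith) (by positivity)
    have h3 : ∫ t in Ioi (0 : ℝ), t ^ (s - 1) * (K * Real.exp (-(t ^ 2 * ‖z‖ ^ 2) / 2)) =
        K * ∫ t in Ioi (0 : ℝ), t ^ (s - 1) * Real.exp (-(‖z‖ ^ 2 / 2) * t ^ (2 : ℝ)) := by
      rw [← integral_const_mul]
      refine integral_congr_ae (.of_forall fun t ↦ ?_)
      simp only [Real.rpow_two]
      rw [mul_left_comm]
      congr 4
      ring
    rw [h3, h2] at h1
    simp only [sq_abs] at h1
    simp only [norm_smul, mul_pow, Real.norm_eq_abs, sq_abs]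
    rw [h1, div_eq_mul_one_div (‖z‖ ^ 2), Real.mul_rpow (by positivity) (by positivity),
      ← Real.rpow_natCast_mul (by positivity)]
    have e1 : -(s - 1 + 1) / 2 = -s / 2 := by ring
    have e2 : (s - 1 + 1) / 2 = s / 2 := by ring
    have e3 : ((2 : ℕ) : ℝ) * (-s / 2) = -s := by push_cast; ring
    rw [e1, e2, e3]
    ring
  have hpos : 0 < 2 * K * ((1 / 2 : ℝ) ^ (-s / 2) * (1 / 2) * Real.Gamma (s / 2)) * ‖z‖ ^ (-s) := by
    positivity
  have hint : Integrable fun t : ℝ ↦ |t| ^ (s - 1) * (K * Real.exp (-‖t • z‖ ^ 2 / 2)) :=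
    Integrable.of_integral_ne_zero (by rw [hval]; exact hpos.ne')
  simp_rw [← ENNReal.ofReal_mul (Real.rpow_nonneg (abs_nonneg _) (s - 1))]
  rw [← ofReal_integral_eq_lintegral_ofReal hint (.of_forall fun _ ↦ by positivity), hval,
    ENNReal.ofReal_mul (by positivity), ← ENNReal.ofReal_rpow_of_pos hz0, ofReal_norm]
  rfl

section Fourier

variable {E : Type*} [NormedAddCommGroup E] [InnerProductSpace ℝ E] [MeasurableSpace E]
  [BorelSpace E] [SecondCountableTopology E]

/-- Fubini's theorem for an integral against a dilated characteristic function. -/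
lemma integral_mul_charFun_smul (κ τ : Measure E) [SFinite κ] [IsFiniteMeasure τ]
    {φ : E → ℂ} (hφ : Integrable φ κ) (c : ℝ) :
    ∫ ξ, φ ξ * charFun τ (c • ξ) ∂κ =
      ∫ x, ∫ ξ, Complex.exp ((c * ⟪x, ξ⟫ : ℝ) * Complex.I) * φ ξ ∂κ ∂τ := by
  have hint : Integrable (fun p : E × E ↦
      Complex.exp ((c * ⟪p.2, p.1⟫ : ℝ) * Complex.I) * φ p.1) (κ.prod τ) := by
    refine (hφ.comp_fst τ).bdd_mul (c := 1) ?_ ?_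
    · exact Continuous.aestronglyMeasurable (by fun_prop)
    · exact .of_forall fun p ↦ (Complex.norm_exp_ofReal_mul_I _).le
  rw [← integral_integral_swap hint]
  refine integral_congr_ae (.of_forall fun ξ ↦ ?_)
  simp only [charFun_apply, inner_smul_right]
  rw [mul_comm, ← integral_mul_const]

/-- Multiplication formula for the Fourier transform of the characteristic function of `τ`:
tested against Schwartz functions, it is `τ` itself. -/
lemma integral_schwartz_mul_fourier_charFun {τ : Measure ℝ} [IsFiniteMeasure τ]
    (hτ : Integrable (fun ξ : ℝ ↦ charFun τ (2 * Real.pi * ξ))) (ψ : SchwartzMap ℝ ℂ) :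
    ∫ u, ψ u * 𝓕 (fun ξ : ℝ ↦ charFun τ (2 * Real.pi * ξ)) u = ∫ x, ψ x ∂τ := by
  have h1 : ∫ ξ, 𝓕 (ψ : ℝ → ℂ) ξ * charFun τ (2 * Real.pi * ξ) =
      ∫ u, ψ u * 𝓕 (fun ξ : ℝ ↦ charFun τ (2 * Real.pi * ξ)) u := by
    simpa using! VectorFourier.integral_fourierIntegral_smul_eq_flip (L := innerₗ ℝ)
      Real.continuous_fourierChar continuous_inner ψ.integrable hτ
  have h2 : ∀ x, 𝓕⁻ (𝓕 (ψ : ℝ → ℂ)) x = ψ x := fun x ↦ by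
    rw [← SchwartzMap.fourier_coe, ← SchwartzMap.fourierInv_coe,
      FourierTransform.fourierInv_fourier_eq]
  have h3 := integral_mul_charFun_smul volume τ (φ := 𝓕 (ψ : ℝ → ℂ))
    (by rw [← SchwartzMap.fourier_coe]; exact (𝓕 ψ).integrable) (2 * Real.pi)
  rw [← h1]
  simp only [smul_eq_mul] at h3
  rw [h3]
  refine integral_congr_ae (.of_forall fun x ↦ ?_)
  simp only
  rw [← h2 x, Real.fourierInv_eq']
  simp [mul_comm]

lemma continuous_fourier_of_integrable {f : ℝ → ℂ} (hf : Integrable f) : Continuous (𝓕 f) :=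
  VectorFourier.fourierIntegral_continuous Real.continuous_fourierChar
    (L := innerₗ ℝ) continuous_inner hf

/-- The Fourier transform of the characteristic function of `τ` vanishes on `τ`-null open sets. -/
lemma fourier_charFun_eq_zero_of_measure_eq_zero {τ : Measure ℝ} [IsFiniteMeasure τ]
    (hτ : Integrable (fun ξ : ℝ ↦ charFun τ (2 * Real.pi * ξ))) {U : Set ℝ} (hU : IsOpen U)
    (h0 : τ U = 0) : ∀ u ∈ U, 𝓕 (fun ξ : ℝ ↦ charFun τ (2 * Real.pi * ξ)) u = 0 := by
  have hc := continuous_fourier_of_integrable hτ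
  have hae := hU.ae_eq_zero_of_integral_contDiff_smul_eq_zero (μ := volume)
    (hc.locallyIntegrable.locallyIntegrableOn U) fun g hg hgc hgU ↦ by
      have hs : HasCompactSupport (fun x ↦ (g x : ℂ)) := hgc.comp_left (g := Complex.ofReal) rfl
      have key := integral_schwartz_mul_fourier_charFun hτ
        (hs.toSchwartzMap (Complex.ofRealCLM.contDiff.comp hg))
      change ∫ u, (g u : ℂ) * _ = ∫ x, (g x : ℂ) ∂τ at key
      simp only [Complex.real_smul]
      rw [key]
      refine integral_eq_zero_of_ae ?_
      filter_upwards [measure_eq_zero_iff_ae_notMem.1 h0] with x hx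
      simp [image_eq_zero_of_notMem_tsupport fun h ↦ hx (hgU h)]
  exact Measure.eqOn_open_of_ae_eq (g := fun _ ↦ 0)
    ((ae_restrict_iff' hU.measurableSet).2 hae) hU hc.continuousOn continuousOn_const

/-- An open set on which the Fourier transform of the characteristic function of `τ` vanishes
is `τ`-null. -/
lemma measure_eq_zero_of_fourier_charFun_eq_zero {τ : Measure ℝ} [IsFiniteMeasure τ]
    (hτ : Integrable (fun ξ : ℝ ↦ charFun τ (2 * Real.pi * ξ))) {U : Set ℝ} (hU : IsOpen U)
    (h0 : ∀ u ∈ U, 𝓕 (fun ξ : ℝ ↦ charFun τ (2 * Real.pi * ξ)) u = 0) : τ U = 0 := by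
  refine measure_null_of_locally_null U fun x hx ↦ ?_
  obtain ⟨g, hgU, hgc, hg, hg01, hgx⟩ :=
    exists_contDiff_tsupport_subset (n := ⊤) (hU.mem_nhds hx)
  have hs : HasCompactSupport (fun x ↦ (g x : ℂ)) := hgc.comp_left (g := Complex.ofReal) rfl
  have key := integral_schwartz_mul_fourier_charFun hτ
    (hs.toSchwartzMap (Complex.ofRealCLM.contDiff.comp hg))
  change ∫ u, (g u : ℂ) * _ = ∫ x, (g x : ℂ) ∂τ at key
  have hz : ∀ u, (g u : ℂ) * 𝓕 (fun ξ : ℝ ↦ charFun τ (2 * Real.pi * ξ)) u = 0 := fun u ↦ by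
    by_cases hu : u ∈ U
    · simp [h0 u hu]
    · simp [image_eq_zero_of_notMem_tsupport fun h ↦ hu (hgU h)]
  simp only [hz, integral_zero, integral_complex_ofReal] at key
  have key' : ∫ x, g x ∂τ = 0 := by exact_mod_cast key.symm
  have hgi : Integrable g τ := hg.continuous.integrable_of_hasCompactSupport hgc
  have hg0 : ∀ x, 0 ≤ g x := fun x ↦ (hg01 (mem_range_self x)).1
  rw [integral_eq_zero_iff_of_nonneg hg0 hgi] at key'
  refine ⟨{y | g y ≠ 0}, mem_nhdsWithin_of_mem_nhds ?_, key'⟩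
  exact (isOpen_ne_fun hg.continuous continuous_const).mem_nhds (by simp [hgx])

/-- Two finite measures on the line with integrable characteristic functions that are not
orthogonal have essential carriers with overlapping interiors. -/
theorem interior_inter_nonempty_of_integral_charFun_ne_zero {ρ τ : Measure ℝ}
    [IsFiniteMeasure ρ] [IsFiniteMeasure τ]
    (hρ : Integrable (charFun ρ)) (hτ : Integrable (charFun τ))
    (h : ∫ ξ, charFun ρ ξ * charFun τ (-ξ) ≠ 0) {A B : Set ℝ} (hA : IsClosed A) (hB : IsClosed B)
    (hρA : ρ Aᶜ = 0) (hτB : τ Bᶜ = 0) : (interior (A ∩ B)).Nonempty := by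
  have hpi : (2 * Real.pi) ≠ 0 := by positivity
  replace hρ := hρ.comp_mul_left' hpi
  replace hτ := hτ.comp_mul_left' hpi
  set f := 𝓕 (fun ξ : ℝ ↦ charFun ρ (2 * Real.pi * ξ)) with hf
  set g := 𝓕 (fun ξ : ℝ ↦ charFun τ (2 * Real.pi * ξ)) with hg
  have hfc : Continuous f := continuous_fourier_of_integrable hρ
  have hgc : Continuous g := continuous_fourier_of_integrable hτ
  have hfV : IsOpen {u | f u ≠ 0} := isOpen_ne_fun hfc continuous_const
  have hgV : IsOpen {u | g u ≠ 0} := isOpen_ne_fun hgc continuous_const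
  have hfτ : ∫ u, f u ∂τ ≠ 0 := by
    have h1 := integral_mul_charFun_smul volume τ hρ (-(2 * Real.pi))
    have h2 := Measure.integral_comp_mul_left (fun ξ ↦ charFun ρ ξ * charFun τ (-ξ)) (2 * Real.pi)
    have h3 : ∫ u, f u ∂τ = |(2 * Real.pi)⁻¹| • ∫ ξ, charFun ρ ξ * charFun τ (-ξ) := by
      rw [← h2]
      simp only [smul_eq_mul, neg_mul] at h1 ⊢
      rw [h1]
      refine integral_congr_ae (.of_forall fun u ↦ ?_)
      simp only [hf]
      rw [Real.fourier_eq']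
      simp [mul_comm, mul_left_comm]
    rw [h3]
    exact smul_ne_zero (by positivity) h
  have hpos : τ {u | f u ≠ 0} ≠ 0 := fun h0 ↦ hfτ (integral_eq_zero_of_ae h0)
  obtain ⟨u, hu, hgu⟩ : ∃ u ∈ {u | f u ≠ 0}, g u ≠ 0 := by
    by_contra! hcon
    exact hpos (measure_eq_zero_of_fourier_charFun_eq_zero hτ hfV hcon)
  refine ⟨u, mem_interior.2 ⟨_, ?_, hfV.inter hgV, hu, hgu⟩⟩
  rintro v ⟨hv, hv'⟩
  constructor
  · by_contra hvA
    exact hv (fourier_charFun_eq_zero_of_measure_eq_zero hρ hA.isOpen_compl hρA v hvA)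
  · by_contra hvB
    exact hv' (fourier_charFun_eq_zero_of_measure_eq_zero hτ hB.isOpen_compl hτB v hvB)

/-- The characteristic function of the law of the difference of two independent vectors. -/
lemma charFun_map_sub (μ ν : Measure E) [IsFiniteMeasure μ] [IsFiniteMeasure ν] (t : E) :
    charFun ((μ.prod ν).map fun p ↦ p.1 - p.2) t = charFun μ t * charFun ν (-t) := by
  rw [charFun_apply, integral_map (by fun_prop) (by fun_prop), charFun_apply, charFun_apply,
    ← integral_prod_mul]
  refine integral_congr_ae (.of_forall fun p ↦ ?_)
  simp only [← Complex.exp_add, inner_sub_left, inner_neg_right]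
  congr 1
  push_cast
  ring

variable {γ : Measure E} [IsFiniteMeasure γ] {K : ℝ}

lemma integral_charFun_smul_gaussian
    (hγ : ∀ x, charFun γ x = (K * Real.exp (-‖x‖ ^ 2 / 2) : ℝ))
    (ρ : Measure E) [IsFiniteMeasure ρ] (t : ℝ) :
    ∫ e, charFun ρ (t • e) ∂γ = (∫ z, K * Real.exp (-‖t • z‖ ^ 2 / 2) ∂ρ : ℝ) := by
  have h := integral_mul_charFun_smul γ ρ (φ := fun _ ↦ 1) (integrable_const _) t
  simp only [one_mul, mul_one] at h
  rw [h, ← integral_complex_ofReal]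
  refine integral_congr_ae (.of_forall fun z ↦ ?_)
  simp only
  rw [← hγ, charFun_apply]
  simp [inner_smul_right, real_inner_comm]

lemma integrable_gaussian (hK : 0 < K) (ρ : Measure E) [IsFiniteMeasure ρ] (t : ℝ) :
    Integrable (fun z ↦ K * Real.exp (-‖t • z‖ ^ 2 / 2)) ρ := by
  refine Integrable.of_bound (C := K) (by fun_prop) (.of_forall fun z ↦ ?_)
  rw [Real.norm_of_nonneg (by positivity)]
  refine mul_le_of_le_one_right hK.le (Real.exp_le_one_iff.2 ?_)
  have : 0 ≤ ‖t • z‖ ^ 2 := by positivity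
  linarith

lemma lintegral_charFun_sq_gaussian (hK : 0 < K)
    (hγ : ∀ x, charFun γ x = (K * Real.exp (-‖x‖ ^ 2 / 2) : ℝ))
    (μ : Measure E) [IsFiniteMeasure μ] (t : ℝ) :
    ∫⁻ e, ENNReal.ofReal (‖charFun μ (t • e)‖ ^ 2) ∂γ =
      ∫⁻ z, ENNReal.ofReal (K * Real.exp (-‖t • z‖ ^ 2 / 2))
        ∂((μ.prod μ).map fun p ↦ p.1 - p.2) := by
  have hm : Measurable (charFun μ) := measurable_charFun
  have h1 : Integrable (fun e ↦ ‖charFun μ (t • e)‖ ^ 2) γ := by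
    refine Integrable.of_bound (C := (μ.real univ) ^ 2) (by fun_prop) (.of_forall fun e ↦ ?_)
    rw [norm_pow, norm_norm]
    gcongr
    exact norm_charFun_le _
  have h2 : Integrable (fun z ↦ K * Real.exp (-‖t • z‖ ^ 2 / 2))
      ((μ.prod μ).map fun p ↦ p.1 - p.2) :=
    integrable_gaussian hK _ t
  rw [← ofReal_integral_eq_lintegral_ofReal h1 (.of_forall fun _ ↦ by positivity),
    ← ofReal_integral_eq_lintegral_ofReal h2 (.of_forall fun _ ↦ by positivity)]
  congr 1
  have h := integral_charFun_smul_gaussian hγ ((μ.prod μ).map fun p ↦ p.1 - p.2) t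
  rw [← Complex.ofReal_inj, ← h, ← integral_complex_ofReal]
  refine integral_congr_ae (.of_forall fun e ↦ ?_)
  simp only
  rw [charFun_map_sub, charFun_neg, Complex.mul_conj, Complex.normSq_eq_norm_sq]

/-- If `μ` has finite `s`-energy with `s > 2`, then its Fourier transform is integrable along
lines in Gaussian random directions. -/
theorem integrable_charFun_smul_of_energy (hK : 0 < K)
    (hγ : ∀ x, charFun γ x = (K * Real.exp (-‖x‖ ^ 2 / 2) : ℝ))
    {s : ℝ} (hs : 2 < s) (μ : Measure E) [IsFiniteMeasure μ]
    (hμ : ∫⁻ x, ∫⁻ y, (‖x - y‖₊ : ℝ≥0∞) ^ (-s) ∂μ ∂μ < ∞) :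
    Integrable (fun p : E × ℝ ↦ charFun μ (p.2 • p.1)) (γ.prod volume) := by
  have hm : Measurable (charFun μ) := measurable_charFun
  obtain ⟨C, hC, hle⟩ := lintegral_rpow_mul_gaussian_le E (show 0 < s by linarith) hK
  have hsq : Integrable (fun p : E × ℝ ↦ |p.2| ^ (s - 1) * ‖charFun μ (p.2 • p.1)‖ ^ 2)
      (γ.prod volume) := by
    refine ⟨by fun_prop, ?_⟩
    rw [hasFiniteIntegral_iff_ofReal (.of_forall fun _ ↦ by positivity),
      lintegral_prod_symm _ (by fun_prop)]
    simp_rw [ENNReal.ofReal_mul (Real.rpow_nonneg (abs_nonneg _) (s - 1))]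
    calc ∫⁻ t, ∫⁻ e, ENNReal.ofReal (|t| ^ (s - 1)) *
          ENNReal.ofReal (‖charFun μ (t • e)‖ ^ 2) ∂γ
        = ∫⁻ t, ∫⁻ z, ENNReal.ofReal (|t| ^ (s - 1)) *
            ENNReal.ofReal (K * Real.exp (-‖t • z‖ ^ 2 / 2))
              ∂((μ.prod μ).map fun p ↦ p.1 - p.2) := by
          refine lintegral_congr fun t ↦ ?_
          rw [lintegral_const_mul _ (by fun_prop), lintegral_const_mul _ (by fun_prop),
            lintegral_charFun_sq_gaussian hK hγ]
      _ = ∫⁻ z, ∫⁻ t : ℝ, ENNReal.ofReal (|t| ^ (s - 1)) *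
            ENNReal.ofReal (K * Real.exp (-‖t • z‖ ^ 2 / 2))
              ∂volume ∂((μ.prod μ).map fun p ↦ p.1 - p.2) := lintegral_lintegral_swap (by fun_prop)
      _ ≤ ∫⁻ z, ENNReal.ofReal C * (‖z‖₊ : ℝ≥0∞) ^ (-s) ∂((μ.prod μ).map fun p ↦ p.1 - p.2) :=
          lintegral_mono hle
      _ = ENNReal.ofReal C * ∫⁻ x, ∫⁻ y, (‖x - y‖₊ : ℝ≥0∞) ^ (-s) ∂μ ∂μ := by
          rw [lintegral_const_mul _ (by fun_prop), lintegral_map (by fun_prop) (by fun_prop),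
            lintegral_prod _ (by fun_prop)]
      _ < ∞ := ENNReal.mul_lt_top ENNReal.ofReal_lt_top hμ
  have htail : Integrable (fun p : E × ℝ ↦
      (2 : ℝ) ^ (s - 1) * (μ.real univ + 1) * (1 + ‖p.2‖) ^ (-(s - 1))) (γ.prod volume) :=
    ((integrable_one_add_norm (μ := (volume : Measure ℝ)) (r := s - 1)
      (by simp; linarith)).const_mul _).comp_snd γ
  refine (htail.add hsq).mono' (by fun_prop) (.of_forall fun p ↦ ?_)
  obtain ⟨e, t⟩ := p
  simp only [Pi.add_apply, Real.norm_eq_abs]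
  set a := ‖charFun μ (t • e)‖ with ha
  have ha0 : 0 ≤ a := norm_nonneg _
  have haM : a ≤ μ.real univ := norm_charFun_le _
  have hM : 0 ≤ μ.real univ := measureReal_nonneg
  have hb : (2 : ℝ) ^ (s - 1) * (1 + |t|) ^ (-(s - 1)) = (2 / (1 + |t|)) ^ (s - 1) := by
    rw [Real.div_rpow (by norm_num) (by positivity), Real.rpow_neg (by positivity)]
    rfl
  rw [mul_right_comm, hb]
  rcases le_total |t| 1 with ht | ht
  · have h1 : 1 ≤ (2 / (1 + |t|)) ^ (s - 1) := by
      refine Real.one_le_rpow ?_ (by linarith)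
      rw [le_div_iff₀ (by positivity)]
      linarith
    have h2 : 0 ≤ |t| ^ (s - 1) * a ^ 2 := by positivity
    nlinarith
  · have ht0 : 0 < |t| := by linarith
    have h1 : (|t| ^ (s - 1))⁻¹ ≤ (2 / (1 + |t|)) ^ (s - 1) := by
      rw [← Real.inv_rpow ht0.le]
      refine Real.rpow_le_rpow (by positivity) ?_ (by linarith)
      rw [inv_eq_one_div, div_le_div_iff₀ ht0 (by positivity)]
      linarith
    have hw : 0 < |t| ^ (s - 1) := by positivity
    have h2 : a ≤ (|t| ^ (s - 1))⁻¹ + |t| ^ (s - 1) * a ^ 2 := by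
      rcases le_total a (|t| ^ (s - 1))⁻¹ with h | h
      · have : 0 ≤ |t| ^ (s - 1) * a ^ 2 := by positivity
        linarith
      · have h3 : 1 ≤ |t| ^ (s - 1) * a := by
          rwa [inv_le_iff_one_le_mul₀' hw] at h
        have h4 : 0 ≤ (|t| ^ (s - 1))⁻¹ := by positivity
        nlinarith
    have h5 : 0 ≤ (2 / (1 + |t|)) ^ (s - 1) := by positivity
    nlinarith

/-- Projections of two nonzero measures of finite energy to Gaussian random lines are correlated on
average. -/
theorem not_ae_integral_charFun_smul_eq_zero (hK : 0 < K)
    (hγ : ∀ x, charFun γ x = (K * Real.exp (-‖x‖ ^ 2 / 2) : ℝ))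
    {μ ν : Measure E} [IsFiniteMeasure μ] [IsFiniteMeasure ν] (hμ : μ ≠ 0) (hν : ν ≠ 0)
    (hint : Integrable (fun p : E × ℝ ↦ charFun μ (p.2 • p.1)) (γ.prod volume)) :
    ¬ ∀ᵐ e ∂γ, ∫ t : ℝ, charFun μ (t • e) * charFun ν (-(t • e)) = 0 := by
  intro hcon
  have hmν : Measurable (charFun ν) := measurable_charFun
  set ρ := (μ.prod ν).map fun p ↦ p.1 - p.2 with hρ
  have hρ0 : ρ ≠ 0 := by
    rw [← Measure.measure_univ_ne_zero, hρ, Measure.map_apply (by fun_prop) .univ,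
      preimage_univ, ← univ_prod_univ, Measure.prod_prod]
    exact mul_ne_zero (Measure.measure_univ_ne_zero.2 hμ) (Measure.measure_univ_ne_zero.2 hν)
  have hint2 : Integrable (fun p : E × ℝ ↦ charFun ρ (p.2 • p.1)) (γ.prod volume) := by
    simp_rw [hρ, charFun_map_sub]
    exact hint.mul_bdd (c := ν.real univ) (by fun_prop) (.of_forall fun p ↦ norm_charFun_le _)
  have h1 : ∫ t : ℝ, ∫ e, charFun ρ (t • e) ∂γ = 0 := by
    rw [← integral_integral_swap (f := fun e (t : ℝ) ↦ charFun ρ (t • e)) hint2]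
    refine integral_eq_zero_of_ae ?_
    filter_upwards [hcon] with e he
    simpa only [hρ, charFun_map_sub, Pi.zero_apply] using he
  have hJ : Integrable fun t : ℝ ↦ ∫ e, charFun ρ (t • e) ∂γ := hint2.integral_prod_right
  simp_rw [integral_charFun_smul_gaussian hγ] at h1 hJ
  rw [integral_complex_ofReal, Complex.ofReal_eq_zero] at h1
  have hJ' : Integrable fun t : ℝ ↦ ∫ z, K * Real.exp (-‖t • z‖ ^ 2 / 2) ∂ρ := by
    simpa using hJ.re
  have hpos : ∀ t : ℝ, 0 < ∫ z, K * Real.exp (-‖t • z‖ ^ 2 / 2) ∂ρ := fun t ↦ by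
    have hi := integrable_gaussian hK ρ t
    rw [integral_pos_iff_support_of_nonneg (fun _ ↦ by positivity) hi]
    have : Function.support (fun z : E ↦ K * Real.exp (-‖t • z‖ ^ 2 / 2)) = univ :=
      eq_univ_of_forall fun z ↦ by
        have : 0 < K * Real.exp (-‖t • z‖ ^ 2 / 2) := by positivity
        exact this.ne'
    rw [this]
    exact Measure.measure_univ_pos.2 hρ0
  refine h1.not_gt ?_
  rw [integral_pos_iff_support_of_nonneg (fun t ↦ (hpos t).le) hJ']
  have : Function.support (fun t : ℝ ↦ ∫ z, K * Real.exp (-‖t • z‖ ^ 2 / 2) ∂ρ) = univ :=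
    eq_univ_of_forall fun t ↦ (hpos t).ne'
  rw [this]
  exact Measure.measure_univ_pos.2 (NeZero.ne _)

end Fourier

/-- The central projection onto the hyperplane where the `i`-th coordinate is `1` is Lipschitz
on the part of the unit ball away from the parallel hyperplane through the origin. -/
lemma lipschitzOnWith_central_projection {m : ℕ} (i : Fin (m + 1)) (c : ℝ) (k : ℕ) :
    LipschitzOnWith (Real.toNNReal (|c| * (2 * ((k : ℝ) + 1) ^ 2)))
      (fun e : EuclideanSpace ℝ (Fin (m + 1)) ↦ fun j : Fin m ↦ c * (e (i.succAbove j) / e i))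
      {e | ‖e‖ = 1 ∧ 1 / ((k : ℝ) + 1) ≤ |e i|} := by
  refine LipschitzOnWith.of_dist_le_mul ?_
  rintro a ⟨ha, hai⟩ b ⟨hb, hbi⟩
  rw [Real.coe_toNNReal _ (by positivity)]
  refine (dist_pi_le_iff (by positivity)).2 fun j ↦ ?_
  have hk : (0 : ℝ) < k + 1 := by positivity
  have ha0 : 0 < |a i| := lt_of_lt_of_le (by positivity) hai
  have hb0 : 0 < |b i| := lt_of_lt_of_le (by positivity) hbi
  have ha1 : a i ≠ 0 := abs_pos.1 ha0
  have hb1 : b i ≠ 0 := abs_pos.1 hb0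
  have hinv : ∀ {t : ℝ}, 1 / ((k : ℝ) + 1) ≤ t → 0 < t → t⁻¹ ≤ k + 1 := fun h ht ↦ by
    rw [inv_le_comm₀ ht hk]; simpa using h
  have hcoord : ∀ l, |a l - b l| ≤ dist a b := fun l ↦ by
    rw [dist_eq_norm]
    simpa using PiLp.norm_apply_le (a - b) l
  have hble : |b (i.succAbove j)| ≤ 1 := by simpa [hb] using PiLp.norm_apply_le b (i.succAbove j)
  have hbile : |b i| ≤ 1 := by simpa [hb] using PiLp.norm_apply_le b i
  have hquot : |a (i.succAbove j) / a i - b (i.succAbove j) / b i| ≤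
      2 * ((k : ℝ) + 1) ^ 2 * dist a b := by
    have : a (i.succAbove j) / a i - b (i.succAbove j) / b i =
        ((a (i.succAbove j) - b (i.succAbove j)) * b i - b (i.succAbove j) * (a i - b i)) *
          ((a i)⁻¹ * (b i)⁻¹) := by
      field_simp; ring
    rw [this, abs_mul, abs_mul, abs_inv, abs_inv]
    have h1 : |(a (i.succAbove j) - b (i.succAbove j)) * b i - b (i.succAbove j) * (a i - b i)| ≤
        2 * dist a b := by
      refine (abs_sub _ _).trans ?_
      rw [abs_mul, abs_mul]
      nlinarith [hcoord i, hcoord (i.succAbove j), abs_nonneg (a i - b i),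
        abs_nonneg (a (i.succAbove j) - b (i.succAbove j)), abs_nonneg (b i),
        abs_nonneg (b (i.succAbove j))]
    have h2 : |a i|⁻¹ * |b i|⁻¹ ≤ ((k : ℝ) + 1) * (k + 1) :=
      mul_le_mul (hinv hai ha0) (hinv hbi hb0) (by positivity) hk.le
    calc _ ≤ 2 * dist a b * (((k : ℝ) + 1) * (k + 1)) :=
          mul_le_mul h1 h2 (by positivity) (by positivity)
      _ = _ := by ring
  rw [Real.dist_eq, ← mul_sub, abs_mul, mul_assoc]
  exact mul_le_mul_of_nonneg_left hquot (abs_nonneg c)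

/-- The cone over a subset of the unit sphere that is null for the `m`-dimensional Hausdorff
measure is Lebesgue null in `ℝ^(m+1)`. -/
lemma volume_cone_eq_zero {m : ℕ} {S : Set (EuclideanSpace ℝ (Fin (m + 1)))}
    (hS : μH[(m : ℝ)] S = 0) :
    volume {v : EuclideanSpace ℝ (Fin (m + 1)) | v ≠ 0 ∧ ‖v‖⁻¹ • v ∈ S} = 0 := by
  wlog hSm : MeasurableSet S generalizing S
  · refine measure_mono_null ?_ (this ((measure_toMeasurable S).trans hS)
      (measurableSet_toMeasurable _ S))
    exact fun v hv ↦ ⟨hv.1, subset_toMeasurable _ S hv.2⟩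
  set C : Set (EuclideanSpace ℝ (Fin (m + 1))) := {v | v ≠ 0 ∧ ‖v‖⁻¹ • v ∈ S} with hC
  have hCm : MeasurableSet C :=
    (measurableSet_singleton 0).compl.inter ((by fun_prop :
      Measurable fun v : EuclideanSpace ℝ (Fin (m + 1)) ↦ ‖v‖⁻¹ • v) hSm)
  have hcov : C ⊆ ⋃ i, C ∩ {v | v i ≠ 0} := by
    intro v hv
    obtain ⟨i, hi⟩ : ∃ i, v i ≠ 0 := by
      by_contra! h
      exact hv.1 (by ext i; simpa using h i)
    exact mem_iUnion.2 ⟨i, hv, hi⟩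
  refine measure_mono_null hcov (measure_iUnion_null fun i ↦ ?_)
  have hDm : MeasurableSet (C ∩ {v | v i ≠ 0}) := hCm.inter
    ((by fun_prop : Measurable fun v : EuclideanSpace ℝ (Fin (m + 1)) ↦ v i)
      (measurableSet_singleton 0).compl)
  set D := C ∩ {v | v i ≠ 0} with hD
  have hmp1 := PiLp.volume_preserving_toLp (Fin (m + 1))
  have hmp2 := (volume_preserving_piFinSuccAbove (fun _ : Fin (m + 1) ↦ ℝ) i).symm
  have hmp := hmp1.comp hmp2
  rw [← hmp.measure_preimage hDm.nullMeasurableSet]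
  refine (Measure.measure_prod_null (hmp.measurable hDm)).2 (.of_forall fun c ↦ ?_)
  have hnull : ∀ k : ℕ, volume ((fun e : EuclideanSpace ℝ (Fin (m + 1)) ↦ fun j : Fin m ↦
      c * (e (i.succAbove j) / e i)) '' (S ∩ {e | ‖e‖ = 1 ∧ 1 / ((k : ℝ) + 1) ≤ |e i|})) = 0 := by
    intro k
    rw [← hausdorffMeasure_pi_real, Fintype.card_fin]
    refine le_antisymm ((((lipschitzOnWith_central_projection i c k).mono
      inter_subset_right).hausdorffMeasure_image_le (Nat.cast_nonneg m)).trans ?_) zero_le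
    rw [measure_mono_null inter_subset_left hS, mul_zero]
  refine measure_mono_null ?_ (measure_iUnion_null hnull)
  intro w hw
  set v : EuclideanSpace ℝ (Fin (m + 1)) := WithLp.toLp 2 (Fin.insertNth i c w) with hv
  have hvD : v ∈ D := hw
  have hvi : v i = c := by simp [hv]
  have hvj : ∀ j, v (i.succAbove j) = w j := fun j ↦ by simp [hv]
  have hn : 0 < ‖v‖ := norm_pos_iff.2 hvD.1.1
  have hc : c ≠ 0 := hvi ▸ hvD.2
  obtain ⟨k, hk⟩ := exists_nat_one_div_lt (show 0 < |(‖v‖⁻¹ • v) i| by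
    simp [hvi, hc, hvD.1.1])
  refine mem_iUnion.2 ⟨k, ‖v‖⁻¹ • v, ⟨hvD.1.2, ?_, hk.le⟩, ?_⟩
  · simp [norm_smul, hn.ne']
  · ext j
    simp only [PiLp.smul_apply, smul_eq_mul, hvi, hvj]
    field_simp

lemma isClosed_and_measure_compl_image_sptm {n : ℕ} {μ : Measure (EuclideanSpace ℝ (Fin n))}
    (hμ : IsCompact (sptm n μ)) (e : EuclideanSpace ℝ (Fin n)) :
    IsClosed ((fun x ↦ ⟪x, e⟫) '' sptm n μ) ∧
      μ.map (fun x ↦ ⟪x, e⟫) ((fun x ↦ ⟪x, e⟫) '' sptm n μ)ᶜ = 0 := by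
  have hcl : IsClosed ((fun x ↦ ⟪x, e⟫) '' sptm n μ) :=
    (hμ.image (by fun_prop : Continuous fun x ↦ ⟪x, e⟫)).isClosed
  refine ⟨hcl, ?_⟩
  have hspt : sptm n μ = μ.support := by
    ext x
    exact (nhds_basis_ball.mem_measureSupport).symm
  rw [Measure.map_apply (by fun_prop) hcl.measurableSet.compl]
  refine measure_mono_null (t := μ.supportᶜ) ?_ Measure.measure_compl_support
  intro x hx hxs
  exact hx ⟨x, hspt ▸ hxs, rfl⟩

lemma charFun_map_inner {E : Type*} [NormedAddCommGroup E] [InnerProductSpace ℝ E]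
    [MeasurableSpace E] [BorelSpace E] (μ : Measure E) (e : E) (t : ℝ) :
    charFun (μ.map fun x ↦ ⟪x, e⟫) t = charFun μ (t • e) := by
  rw [charFun_apply, integral_map (by fun_prop) (by fun_prop), charFun_apply]
  simp [inner_smul_right]

lemma image_inner_smul {E : Type*} [NormedAddCommGroup E] [InnerProductSpace ℝ E]
    (A : Set E) (c : ℝ) (e : E) :
    (fun x ↦ ⟪x, c • e⟫) '' A = c • (fun x ↦ ⟪x, e⟫) '' A := by
  simp only [inner_smul_right, ← image_smul, image_image, smul_eq_mul]

theorem stmt_9 (n : ℕ) (hn : 3 ≤ n) (s t : ℝ) (hs : 2 < s) (ht : 2 < t)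
    (μ ν : Measure (EuclideanSpace ℝ (Fin n)))
    [IsFiniteMeasure μ] [IsFiniteMeasure ν] (hμ0 : μ ≠ 0) (hν0 : ν ≠ 0)
    (hμc : IsCompact (sptm n μ)) (hνc : IsCompact (sptm n ν))
    (hμe : energyI n s μ < ∞) (hνe : energyI n t ν < ∞) :
    0 < μH[(n : ℝ) - 1]
      {e : EuclideanSpace ℝ (Fin n) | ‖e‖ = 1 ∧
        (interior ((fun x => ⟪x, e⟫) '' sptm n μ ∩
          (fun x => ⟪x, e⟫) '' sptm n ν)).Nonempty} := by
  obtain ⟨m, rfl⟩ : ∃ m, n = m + 1 := ⟨n - 1, by omega⟩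
  rw [pos_iff_ne_zero]
  intro hnull
  rw [Nat.cast_add, Nat.cast_one, add_sub_cancel_right] at hnull
  obtain ⟨γ, hγfin, hγvol, K, hK, hγ⟩ := exists_gaussian_measure (EuclideanSpace ℝ (Fin (m + 1)))
  have hμint := integrable_charFun_smul_of_energy hK hγ hs μ hμe
  have hνint := integrable_charFun_smul_of_energy hK hγ ht ν hνe
  have hcone := hγvol.ae_le (measure_eq_zero_iff_ae_notMem.1 (volume_cone_eq_zero hnull))
  have hne : ∀ᵐ e ∂γ, e ≠ 0 :=
    hγvol.ae_le (measure_eq_zero_iff_ae_notMem.1 (measure_singleton 0))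
  refine not_ae_integral_charFun_smul_eq_zero hK hγ hμ0 hν0 hμint ?_
  filter_upwards [hcone, hne, hμint.prod_right_ae, hνint.prod_right_ae] with e hce he0 hμe' hνe'
  by_contra hcorr
  refine hce ⟨he0, by simp [norm_smul, he0], ?_⟩
  obtain ⟨hAc, hA0⟩ := isClosed_and_measure_compl_image_sptm hμc e
  obtain ⟨hBc, hB0⟩ := isClosed_and_measure_compl_image_sptm hνc e
  have hint := interior_inter_nonempty_of_integral_charFun_ne_zero
    (ρ := μ.map fun x ↦ ⟪x, e⟫) (τ := ν.map fun x ↦ ⟪x, e⟫)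
    (hμe'.congr (.of_forall fun t ↦ (charFun_map_inner μ e t).symm))
    (hνe'.congr (.of_forall fun t ↦ (charFun_map_inner ν e t).symm))
    (by simpa only [charFun_map_inner, neg_smul] using hcorr) hAc hBc hA0 hB0
  have hc : ‖e‖⁻¹ ≠ 0 := inv_ne_zero (norm_ne_zero_iff.2 he0)
  rw [image_inner_smul, image_inner_smul, ← smul_set_inter₀ hc, interior_smul₀ hc]
  exact hint.smul_set
end

section
/- Let n ≥ 2 and let A ⊆ ℝⁿ be a Borel set with dimH A > n−1. Then for every point x ∈ ℝⁿ and for H^{n−1}-almost every unit vector e ∈ S^{n−1}, the line section satisfies dimH( A ∩ { x + r·e : r ∈ ℝ } ) ≤ dimH A − (n−1). -/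
open MeasureTheory Metric Set
open scoped ENNReal RealInnerProductSpace

open Filter Topology
open scoped NNReal

section HausdorffMeasure

variable {X Y : Type*} [EMetricSpace X] [MeasurableSpace X] [BorelSpace X]
  [EMetricSpace Y] [MeasurableSpace Y] [BorelSpace Y]

/-- A set of vanishing Hausdorff measure has arbitrarily fine and cheap countable covers. -/
lemma exists_cover_tsum_lt_of_hausdorffMeasure_eq_zero {d : ℝ} (hd : 0 < d) {s : Set X}
    (hs : μH[d] s = 0) {r ε : ℝ≥0∞} (hr : 0 < r) (hε : 0 < ε) :
    ∃ t : ℕ → Set X, s ⊆ ⋃ k, t k ∧ (∀ k, ediam (t k) ≤ r) ∧ ∑' k, ediam (t k) ^ d < ε := by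
  rw [Measure.hausdorffMeasure_apply] at hs
  simp only [ENNReal.iSup_eq_zero] at hs
  have h := (hs r hr).trans_lt hε
  simp only [iInf_lt_iff] at h
  obtain ⟨t, hst, htr, hlt⟩ := h
  refine ⟨t, hst, htr, lt_of_le_of_lt (ENNReal.tsum_le_tsum fun k => ?_) hlt⟩
  rcases (t k).eq_empty_or_nonempty with h | h
  · simp [h, hd]
  · simp [h]

/-- A Lipschitz map to `ℝ^ι` has almost all fibres over a `μH[a + card ι]`-null set
`μH[a]`-null. -/
lemma LipschitzOnWith.ae_hausdorffMeasure_fiber_eq_zero {ι : Type*} [Fintype ι] {K : ℝ≥0}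
    {p : X → ι → ℝ} {s : Set X} (hp : LipschitzOnWith K p s) {a : ℝ} (ha : 0 < a)
    (hs : μH[a + Fintype.card ι] s = 0) :
    ∀ᵐ u : ι → ℝ, μH[a] (s ∩ p ⁻¹' {u}) = 0 := by
  have had : 0 < a + Fintype.card ι := by positivity
  obtain ⟨r, -, hr, hr0⟩ := exists_seq_strictAnti_tendsto' (zero_lt_one (α := ℝ≥0∞))
  choose t hst htr htε using fun k =>
    exists_cover_tsum_lt_of_hausdorffMeasure_eq_zero had hs (hr k).1 (hr k).1
  let E : ℕ → ℕ → Set (ι → ℝ) := fun k l => closure (p '' (t k l ∩ s))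
  let g : ℕ → (ι → ℝ) → ℝ≥0∞ := fun k u =>
    ∑' l, (E k l).indicator (fun _ => ediam (t k l) ^ a) u
  have hEm : ∀ k l, MeasurableSet (E k l) := fun k l => isClosed_closure.measurableSet
  have hg : ∀ k, Measurable (g k) := fun k =>
    Measurable.tsum fun l => measurable_const.indicator (hEm k l)
  have hint : ∀ k, ∫⁻ u, g k u ≤ (K : ℝ≥0∞) ^ Fintype.card ι * r k := by
    intro k
    rw [lintegral_tsum fun l => (measurable_const.indicator (hEm k l)).aemeasurable]
    calc ∑' l, ∫⁻ u, (E k l).indicator (fun _ => ediam (t k l) ^ a) u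
        ≤ ∑' l, (K : ℝ≥0∞) ^ Fintype.card ι * ediam (t k l) ^ (a + Fintype.card ι) := by
          refine ENNReal.tsum_le_tsum fun l => ?_
          rw [lintegral_indicator_const (hEm k l),
            ENNReal.rpow_add_of_nonneg _ _ ha.le (Nat.cast_nonneg _), ENNReal.rpow_natCast,
            mul_left_comm, ← mul_pow]
          gcongr
          refine (Real.volume_pi_le_diam_pow _).trans ?_
          gcongr
          rw [ediam_closure]
          have hps : LipschitzOnWith K p (t k l ∩ s) := hp.mono inter_subset_right
          refine ediam_image_le_iff.2 fun y hy z hz => (hps hy hz).trans ?_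
          gcongr
          exact edist_le_ediam_of_mem hy.1 hz.1
      _ ≤ (K : ℝ≥0∞) ^ Fintype.card ι * r k := by
          rw [ENNReal.tsum_mul_left]
          gcongr
          exact (htε k).le
  have hlim : ∫⁻ u, liminf (fun k => g k u) atTop = 0 := by
    refine le_antisymm ((lintegral_liminf_le hg).trans ?_) zero_le
    have h0 : Tendsto (fun k => (K : ℝ≥0∞) ^ Fintype.card ι * r k) atTop (𝓝 0) := by
      simpa using ENNReal.Tendsto.const_mul hr0 (Or.inr (by finiteness))
    rw [← h0.liminf_eq]
    exact liminf_le_liminf (Eventually.of_forall hint)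
  rw [lintegral_eq_zero_iff (Measurable.liminf hg)] at hlim
  filter_upwards [hlim] with u hu
  refine le_antisymm (le_trans ?_ hu.le) zero_le
  refine (Measure.hausdorffMeasure_le_liminf_tsum a _ r hr0
    (fun k l => {y | y ∈ t k l ∧ u ∈ E k l}) (Eventually.of_forall fun k l => ?_)
    (Eventually.of_forall fun k => ?_)).trans ?_
  · exact (ediam_mono fun y hy => hy.1).trans (htr k l)
  · rintro y ⟨hys, rfl⟩
    obtain ⟨l, hl⟩ := mem_iUnion.1 (hst k hys)
    exact mem_iUnion.2 ⟨l, hl, subset_closure ⟨y, ⟨hl, hys⟩, rfl⟩⟩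
  · refine liminf_le_liminf (Eventually.of_forall fun k => ENNReal.tsum_le_tsum fun l => ?_)
    by_cases h : u ∈ E k l <;> simp [h, ha]

/-- A locally Lipschitz map to `ℝ^ι` has almost all fibres over a `μH[a + card ι]`-null set
`μH[a]`-null. -/
lemma LocallyLipschitzOn.ae_hausdorffMeasure_fiber_eq_zero [SecondCountableTopology X]
    {ι : Type*} [Fintype ι] {p : X → ι → ℝ} {s : Set X} (hp : LocallyLipschitzOn s p) {a : ℝ}
    (ha : 0 < a) (hs : μH[a + Fintype.card ι] s = 0) :
    ∀ᵐ u : ι → ℝ, μH[a] (s ∩ p ⁻¹' {u}) = 0 := by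
  have hp' : ∀ y ∈ s, ∃ (K : ℝ≥0) (t : Set X), t ∈ 𝓝[s] y ∧ LipschitzOnWith K p t :=
    fun y hy => hp hy
  choose! K t ht hK using hp'
  obtain ⟨c, hcs, hc, hsc⟩ := TopologicalSpace.countable_cover_nhdsWithin ht
  have key : ∀ y ∈ c, ∀ᵐ u : ι → ℝ, μH[a] ((t y ∩ s) ∩ p ⁻¹' {u}) = 0 := by
    intro y hy
    have hy' : LipschitzOnWith (K y) p (t y ∩ s) := (hK y (hcs hy)).mono inter_subset_left
    exact hy'.ae_hausdorffMeasure_fiber_eq_zero ha (measure_mono_null inter_subset_right hs)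
  filter_upwards [(ae_ball_iff hc).2 key] with u hu
  refine measure_mono_null ?_ ((measure_biUnion_null_iff hc).2 hu)
  rintro y ⟨hys, hyu⟩
  obtain ⟨z, hz, hyz⟩ := mem_iUnion₂.1 (hsc hys)
  exact mem_iUnion₂.2 ⟨z, hz, ⟨hyz, hys⟩, hyu⟩

lemma LocallyLipschitz.hausdorffMeasure_image_eq_zero [SecondCountableTopology X] {f : X → Y}
    (hf : LocallyLipschitz f) {d : ℝ} (hd : 0 ≤ d) {s : Set X} (hs : μH[d] s = 0) :
    μH[d] (f '' s) = 0 := by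
  choose K t ht hK using hf
  obtain ⟨c, hc, hsc⟩ := TopologicalSpace.countable_cover_nhds ht
  have hsub : f '' s ⊆ ⋃ y ∈ c, f '' (t y ∩ s) := by
    rintro _ ⟨y, hy, rfl⟩
    obtain ⟨z, hz, hyz⟩ := mem_iUnion₂.1 (hsc.symm ▸ mem_univ y : y ∈ ⋃ z ∈ c, t z)
    exact mem_iUnion₂.2 ⟨z, hz, y, ⟨hyz, hy⟩, rfl⟩
  refine measure_mono_null hsub ((measure_biUnion_null_iff hc).2 fun y _ => ?_)
  refine le_antisymm ((((hK y).mono inter_subset_left).hausdorffMeasure_image_le hd).trans ?_)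
    zero_le
  rw [measure_mono_null inter_subset_right hs, mul_zero]

end HausdorffMeasure

section Slopes

variable {n : ℕ}

/-- The vector with `i`-th coordinate `1` and the other coordinates given by `u`. -/
noncomputable def slopeVector (i : Fin n) (u : {j // j ≠ i} → ℝ) : EuclideanSpace ℝ (Fin n) :=
  WithLp.toLp 2 fun j => if h : j = i then 1 else u ⟨j, h⟩

lemma slopeVector_self (i : Fin n) (u : {j // j ≠ i} → ℝ) : slopeVector i u i = 1 := by
  simp [slopeVector]

lemma slopeVector_coe (i : Fin n) (u : {j // j ≠ i} → ℝ) (j : {j // j ≠ i}) :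
    slopeVector i u j = u j := by
  simp [slopeVector, j.2]

lemma slopeVector_ne_zero (i : Fin n) (u : {j // j ≠ i} → ℝ) : slopeVector i u ≠ 0 := by
  intro h
  simpa [h] using slopeVector_self i u

lemma contDiff_slopeVector (i : Fin n) : ContDiff ℝ 1 (slopeVector i) := by
  rw [contDiff_euclidean]
  intro j
  by_cases h : j = i
  · subst h
    simp only [slopeVector_self]
    exact contDiff_const
  · have : (fun u => slopeVector i u j) = fun u : {j // j ≠ i} → ℝ => u ⟨j, h⟩ :=
      funext fun u => slopeVector_coe i u ⟨j, h⟩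
    rw [this]
    fun_prop

lemma eq_smul_slopeVector {i : Fin n} {e : EuclideanSpace ℝ (Fin n)} (he : e i ≠ 0) :
    e = e i • slopeVector i fun j => e j / e i := by
  ext j
  by_cases h : j = i
  · subst h
    simp [slopeVector_self]
  · have := slopeVector_coe i (fun j => e j / e i) ⟨j, h⟩
    simp only at this
    simp only [PiLp.smul_apply, smul_eq_mul, this]
    field_simp

/-- For almost every slope, the line section through `x` with this slope has the expected
dimension. -/
lemma ae_dimH_inter_slope_line_le (A : Set (EuclideanSpace ℝ (Fin n)))
    (x : EuclideanSpace ℝ (Fin n)) (i : Fin n) :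
    ∀ᵐ u : {j // j ≠ i} → ℝ,
      dimH (A ∩ {y | ∃ r : ℝ, y = x + r • slopeVector i u}) ≤ dimH A - ((n : ℝ≥0∞) - 1) := by
  set c : ℝ≥0∞ := dimH A - ((n : ℝ≥0∞) - 1) with hc
  rcases eq_or_ne c ∞ with htop | htop
  · simp [htop]
  have hcard : Fintype.card {j // j ≠ i} = n - 1 := by simp
  let p : EuclideanSpace ℝ (Fin n) → {j // j ≠ i} → ℝ := fun y j => (y j - x j) / (y i - x i)
  let s : Set (EuclideanSpace ℝ (Fin n)) := A ∩ {y | y i - x i ≠ 0}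
  have hp : LocallyLipschitzOn s p := by
    intro y hy
    have hyi : y i - x i ≠ 0 := hy.2
    have hcd : ContDiffAt ℝ 1 p y := by
      rw [contDiffAt_pi]
      intro j
      refine ContDiffAt.div ?_ ?_ hyi <;> fun_prop
    obtain ⟨K, t, ht, hK⟩ := hcd.exists_lipschitzOnWith
    exact ⟨K, t, mem_nhdsWithin_of_mem_nhds ht, hK⟩
  have key : ∀ k : ℕ, ∀ᵐ u : {j // j ≠ i} → ℝ,
      dimH (s ∩ p ⁻¹' {u}) ≤ c + (k + 1 : ℝ≥0∞)⁻¹ := by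
    intro k
    set q : ℝ≥0 := c.toNNReal + ((k : ℝ≥0) + 1)⁻¹ with hq
    have hqc : (q : ℝ≥0∞) = c + (k + 1 : ℝ≥0∞)⁻¹ := by
      rw [hq, ENNReal.coe_add, ENNReal.coe_toNNReal htop, ENNReal.coe_inv (by positivity)]
      simp
    have hq0 : 0 < q := by positivity
    have hdim : dimH A < ((q + (n - 1 : ℕ) : ℝ≥0) : ℝ≥0∞) := by
      have h1 : dimH A ≤ c + ((n - 1 : ℕ) : ℝ≥0∞) := by
        rw [hc, ENNReal.natCast_sub, Nat.cast_one]
        exact le_tsub_add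
      refine h1.trans_lt ?_
      rw [ENNReal.coe_add, ENNReal.coe_natCast]
      refine ENNReal.add_lt_add_right (ENNReal.natCast_ne_top _) ?_
      rw [hqc]
      exact ENNReal.lt_add_right htop (ENNReal.inv_ne_zero.2 (by finiteness))
    have hnull : μH[(q : ℝ) + Fintype.card {j // j ≠ i}] s = 0 := by
      refine measure_mono_null inter_subset_left ?_
      have := hausdorffMeasure_of_dimH_lt hdim
      rwa [NNReal.coe_add, NNReal.coe_natCast, ← hcard] at this
    filter_upwards [hp.ae_hausdorffMeasure_fiber_eq_zero (NNReal.coe_pos.2 hq0) hnull] with u hu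
    rw [← hqc]
    exact dimH_le_of_hausdorffMeasure_ne_top (by simp [hu])
  filter_upwards [ae_all_iff.2 key] with u hu
  have hsub : A ∩ {y | ∃ r : ℝ, y = x + r • slopeVector i u} ⊆ {x} ∪ (s ∩ p ⁻¹' {u}) := by
    rintro y ⟨hyA, r, rfl⟩
    rcases eq_or_ne r 0 with rfl | hr
    · simp
    · refine Or.inr ⟨⟨hyA, by simpa [slopeVector_self] using hr⟩, funext fun j => ?_⟩
      simp [p, slopeVector_self, slopeVector_coe, hr]
  refine (dimH_mono hsub).trans ?_
  rw [dimH_union, dimH_singleton, max_eq_right zero_le]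
  have hlim : Tendsto (fun k : ℕ => c + (k + 1 : ℝ≥0∞)⁻¹) atTop (𝓝 (c + 0)) := by
    refine tendsto_const_nhds.add ?_
    have := ENNReal.tendsto_inv_nat_nhds_zero.comp (tendsto_add_atTop_nat 1)
    simpa [Function.comp_def] using this
  rw [add_zero] at hlim
  exact ge_of_tendsto' hlim hu

/-- A set of unit vectors off the hyperplane `e i = 0` is null as soon as its set of slopes is
contained in a null set. -/
lemma hausdorffMeasure_sphere_eq_zero_of_slope (i : Fin n) {N : Set ({j // j ≠ i} → ℝ)}
    (hN : volume N = 0) {B : Set (EuclideanSpace ℝ (Fin n))} (hB : B ⊆ sphere 0 1)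
    (hBN : ∀ e ∈ B, e i ≠ 0 ∧ (fun j : {j // j ≠ i} => e j / e i) ∈ N) :
    μH[(n : ℝ) - 1] B = 0 := by
  have hn : 1 ≤ n := i.pos
  have hcard : ((Fintype.card {j // j ≠ i} : ℕ) : ℝ) = n - 1 := by simp [Nat.cast_sub hn]
  have hN' : μH[(n : ℝ) - 1] N = 0 := by rw [← hcard, hausdorffMeasure_pi_real, hN]
  have hd : (0 : ℝ) ≤ n - 1 := by rw [← hcard]; positivity
  let F : ℝ → ({j // j ≠ i} → ℝ) → EuclideanSpace ℝ (Fin n) := fun σ u =>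
    σ • ‖slopeVector i u‖⁻¹ • slopeVector i u
  have hF : ∀ σ, LocallyLipschitz (F σ) := by
    intro σ
    have hinv : ContDiff ℝ 1 fun u => ‖slopeVector i u‖⁻¹ := ((contDiff_slopeVector i).norm ℝ (slopeVector_ne_zero i)).inv
      fun u => norm_ne_zero_iff.2 (slopeVector_ne_zero i u)
    have hFσ : ContDiff ℝ 1 (F σ) := (hinv.smul (contDiff_slopeVector i)).const_smul σ
    exact hFσ.locallyLipschitz
  have hsub : B ⊆ F 1 '' N ∪ F (-1) '' N := by
    intro e he
    obtain ⟨hei, heN⟩ := hBN e he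
    have hes := eq_smul_slopeVector hei
    set u : {j // j ≠ i} → ℝ := fun j => e j / e i
    have hnorm : |e i| * ‖slopeVector i u‖ = 1 := by
      rw [← Real.norm_eq_abs, ← norm_smul, ← hes]
      simpa using hB he
    have hinv : ‖slopeVector i u‖⁻¹ = |e i| := (eq_inv_of_mul_eq_one_left hnorm).symm
    rcases abs_choice (e i) with h | h
    · refine Or.inl ⟨u, heN, ?_⟩
      simp only [F, hinv, h, one_smul]
      exact hes.symm
    · refine Or.inr ⟨u, heN, ?_⟩
      simp only [F, hinv, h, smul_smul, neg_mul_neg, one_mul]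
      exact hes.symm
  exact measure_mono_null hsub (measure_union_null
    ((hF 1).hausdorffMeasure_image_eq_zero hd hN') ((hF (-1)).hausdorffMeasure_image_eq_zero hd hN'))

end Slopes

theorem stmt_11 (n : ℕ) (hn : 2 ≤ n)
    (A : Set (EuclideanSpace ℝ (Fin n))) (hA : MeasurableSet A)
    (hdA : (n : ℝ≥0∞) - 1 < dimH A) (x : EuclideanSpace ℝ (Fin n)) :
    ∀ᵐ e ∂(μH[(n : ℝ) - 1].restrict (sphere (0 : EuclideanSpace ℝ (Fin n)) 1)),
      dimH (A ∩ {y | ∃ r : ℝ, y = x + r • e}) ≤ dimH A - ((n : ℝ≥0∞) - 1) := by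
  rw [ae_restrict_iff' isClosed_sphere.measurableSet, ae_iff]
  set B := {e : EuclideanSpace ℝ (Fin n) | ¬ (e ∈ sphere 0 1 →
    dimH (A ∩ {y | ∃ r : ℝ, y = x + r • e}) ≤ dimH A - ((n : ℝ≥0∞) - 1))}
  have hsub : B ⊆ ⋃ i, B ∩ {e | e i ≠ 0} := by
    intro e he
    have hes : e ∈ sphere (0 : EuclideanSpace ℝ (Fin n)) 1 := (Classical.not_imp.1 he).1
    by_contra h
    simp only [mem_iUnion, mem_inter_iff, he, true_and, mem_ofPred_eq, not_exists, not_not] at h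
    have : e = 0 := by ext i; simpa using h i
    simp [this] at hes
  refine measure_mono_null hsub (measure_iUnion_null fun i => ?_)
  refine hausdorffMeasure_sphere_eq_zero_of_slope i (ae_iff.1 (ae_dimH_inter_slope_line_le A x i))
    (fun e he => (Classical.not_imp.1 he.1).1) fun e he => ⟨he.2, ?_⟩
  have hei : e i ≠ 0 := he.2
  refine fun hle => (Classical.not_imp.1 he.1).2 (le_trans (dimH_mono ?_) hle)
  rintro y ⟨hyA, r, rfl⟩
  refine ⟨hyA, r * e i, ?_⟩
  rw [mul_smul, ← eq_smul_slopeVector hei]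
end

section
/- Let n ≥ 2 and let A ⊆ ℝⁿ be a Borel set with dimH A > 1. Then for every point x ∈ ℝⁿ and for H^{n−1}-almost every unit vector e ∈ S^{n−1}, the hyperplane section satisfies dimH( A ∩ ( x + e^⊥ ) ) ≤ dimH A − 1, where e^⊥ = { y ∈ ℝⁿ : ⟨y, e⟩ = 0 }. -/
open MeasureTheory Metric Set
open scoped ENNReal RealInnerProductSpace

open Filter Topology
open scoped NNReal

/-- A slab of half-width `a / ‖v‖` orthogonal to `v` meets a ball in a set of small volume. -/
theorem volume_slab_inter_closedBall_le {m : ℕ} (v : EuclideanSpace ℝ (Fin (m + 1))) {δ a R : ℝ}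
    (hδ : 0 < δ) (hv : δ ≤ ‖v‖) (ha : 0 ≤ a) :
    volume {w : EuclideanSpace ℝ (Fin (m + 1)) | ‖w‖ ≤ R ∧ |⟪v, w⟫| ≤ a} ≤
      ENNReal.ofReal (2 * (a / δ)) * ENNReal.ofReal (2 * R) ^ m := by
  have hv0 : 0 < ‖v‖ := hδ.trans_le hv
  obtain ⟨b, hb⟩ := Orthonormal.exists_orthonormalBasis_extension_of_card_eq (𝕜 := ℝ)
    (E := EuclideanSpace ℝ (Fin (m + 1))) (ι := Fin (m + 1)) (by simp)
    (v := fun _ => ‖v‖⁻¹ • v) (s := {0}) (by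
      refine ⟨fun i => ?_, fun i j hij => (hij (Subsingleton.elim i j)).elim⟩
      simp [norm_smul, hv0.ne'])
  have hb0 : b 0 = ‖v‖⁻¹ • v := hb 0 rfl
  have hf := b.measurePreserving_repr_symm.comp (PiLp.volume_preserving_toLp (Fin (m + 1)))
  have hmeas : MeasurableSet
      {w : EuclideanSpace ℝ (Fin (m + 1)) | ‖w‖ ≤ R ∧ |⟪v, w⟫| ≤ a} := by
    refine MeasurableSet.inter (s₁ := {w | ‖w‖ ≤ R}) (s₂ := {w | |⟪v, w⟫| ≤ a}) ?_ ?_ <;>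
      exact measurableSet_le (by fun_prop) (by fun_prop)
  rw [← hf.measure_preimage hmeas.nullMeasurableSet]
  calc _ ≤ volume (Set.pi univ (Fin.cons (closedBall (0 : ℝ) (a / δ))
          (fun _ : Fin m => closedBall (0 : ℝ) R) : Fin (m + 1) → Set ℝ)) := by
        refine measure_mono fun g hg => ?_
        obtain ⟨hg1, hg2⟩ := hg
        set w := b.repr.symm (WithLp.toLp 2 g) with hw
        have hcoord : ∀ i, g i = ⟪b i, w⟫ := fun i => by
          rw [← b.repr_apply_apply, hw]; simp
        have hg1 : ‖w‖ ≤ R := hg1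
        have hg2 : |⟪v, w⟫| ≤ a := hg2
        refine mem_univ_pi.2 fun i => Fin.cases ?_ (fun j => ?_) i
        · simp only [Fin.cons_zero, mem_closedBall_zero_iff, Real.norm_eq_abs]
          rw [hcoord, hb0, real_inner_smul_left, abs_mul, abs_inv, abs_norm,
            inv_mul_eq_div]
          gcongr
        · simp only [Fin.cons_succ, mem_closedBall_zero_iff]
          rw [hcoord]
          exact (norm_inner_le_norm _ _).trans (by simpa using hg1)
    _ = _ := by
        rw [volume_pi_pi, Fin.prod_univ_succ]
        simp [Real.volume_closedBall]

theorem volume_exists_inner_eq_zero_le {m : ℕ} (x : EuclideanSpace ℝ (Fin (m + 1))) {δ R : ℝ}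
    (hδ : 0 < δ) (hR : 0 ≤ R) (t : Set (EuclideanSpace ℝ (Fin (m + 1))))
    (ht : ∀ y ∈ t, δ ≤ ‖y - x‖) (htd : ediam t ≠ ∞) :
    volume {w : EuclideanSpace ℝ (Fin (m + 1)) | ‖w‖ ≤ R ∧ ∃ y ∈ t, ⟪y - x, w⟫ = 0} ≤
      ENNReal.ofReal (2 * (R / δ)) * ENNReal.ofReal (2 * R) ^ m * ediam t := by
  rcases t.eq_empty_or_nonempty with rfl | ⟨z, hz⟩
  · simp
  have hd : ENNReal.ofReal (diam t) = ediam t := ENNReal.ofReal_toReal htd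
  calc _ ≤ volume {w : EuclideanSpace ℝ (Fin (m + 1)) |
          ‖w‖ ≤ R ∧ |⟪z - x, w⟫| ≤ diam t * R} := by
        refine measure_mono ?_
        rintro w ⟨hw, y, hy, hyw⟩
        refine ⟨hw, ?_⟩
        have : ⟪z - x, w⟫ = ⟪z - y, w⟫ := by
          rw [← sub_add_sub_cancel z y x, inner_add_left, hyw, add_zero]
        rw [this]
        calc |⟪z - y, w⟫| ≤ ‖z - y‖ * ‖w‖ := abs_real_inner_le_norm _ _
          _ ≤ diam t * R := by
            gcongr
            rw [← dist_eq_norm]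
            exact dist_le_diam_of_mem' htd hz hy
    _ ≤ _ := volume_slab_inter_closedBall_le _ hδ (ht z hz) (by positivity)
    _ = _ := by
        rw [← hd, mul_right_comm, ← ENNReal.ofReal_mul (by positivity)]
        ring_nf

/-- Away from `x`, almost every hyperplane section through `x` of an `s`-null set is
`(s - 1)`-null. -/
theorem ae_hausdorffMeasure_inter_hyperplane_eq_zero {m : ℕ}
    (x : EuclideanSpace ℝ (Fin (m + 1))) {δ R s : ℝ} (hδ : 0 < δ) (hR : 0 ≤ R) (hs : 1 < s)
    (A : Set (EuclideanSpace ℝ (Fin (m + 1)))) (hA : ∀ y ∈ A, δ ≤ ‖y - x‖) (hA0 : μH[s] A = 0) :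
    ∀ᵐ w ∂(volume : Measure (EuclideanSpace ℝ (Fin (m + 1)))), ‖w‖ ≤ R →
      μH[s - 1] (A ∩ {y | ⟪y - x, w⟫ = 0}) = 0 := by
  have hcover : ∀ k : ℕ, ∃ t : ℕ → Set (EuclideanSpace ℝ (Fin (m + 1))), A ⊆ ⋃ i, t i ∧
      (∀ i, ediam (t i) ≤ (k + 1 : ℝ≥0∞)⁻¹) ∧ ∑' i, ediam (t i) ^ s ≤ (k + 1 : ℝ≥0∞)⁻¹ := by
    intro k
    have hpos : (0 : ℝ≥0∞) < (k + 1 : ℝ≥0∞)⁻¹ := by simp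
    rw [Measure.hausdorffMeasure_apply] at hA0
    have h1 := (iSup₂_eq_bot.1 hA0 _ hpos).trans_lt hpos
    simp only [iInf_lt_iff] at h1
    obtain ⟨t, htA, htd, hsum⟩ := h1
    refine ⟨t, htA, htd, le_trans (ENNReal.tsum_le_tsum fun i => ?_) hsum.le⟩
    rcases (t i).eq_empty_or_nonempty with h | h
    · simp [h, show 0 < s by linarith]
    · simp [h]
  choose t htA htd hsum using hcover
  let B (k i : ℕ) : Set (EuclideanSpace ℝ (Fin (m + 1))) :=
    {w | ‖w‖ ≤ R ∧ ∃ y ∈ t k i ∩ A, ⟪y - x, w⟫ = 0}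
  let C : ℝ≥0∞ := ENNReal.ofReal (2 * (R / δ)) * ENNReal.ofReal (2 * R) ^ m
  have hC : C ≠ ∞ := by finiteness
  have hB (k i : ℕ) : volume (B k i) ≤ C * ediam (t k i) := by
    refine (volume_exists_inner_eq_zero_le x hδ hR _ (fun y hy => hA y hy.2) ?_).trans ?_
    · refine ne_top_of_le_ne_top ?_ ((ediam_mono inter_subset_left).trans (htd k i))
      simp
    · gcongr
      exact inter_subset_left
  let f (k : ℕ) (w : EuclideanSpace ℝ (Fin (m + 1))) : ℝ≥0∞ :=
    ∑' i, (toMeasurable volume (B k i)).indicator (fun _ => ediam (t k i) ^ (s - 1)) w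
  have hfm (k : ℕ) : Measurable (f k) := Measurable.tsum fun i =>
    measurable_const.indicator (measurableSet_toMeasurable _ _)
  have hfint (k : ℕ) : ∫⁻ w, f k w ≤ C * (k + 1 : ℝ≥0∞)⁻¹ := by
    rw [lintegral_tsum fun i =>
      (measurable_const.indicator (measurableSet_toMeasurable _ _)).aemeasurable]
    calc _ ≤ ∑' i, C * ediam (t k i) ^ s := by
          refine ENNReal.tsum_le_tsum fun i => ?_
          rw [lintegral_indicator_const (measurableSet_toMeasurable _ _), measure_toMeasurable]
          calc _ ≤ ediam (t k i) ^ (s - 1) * (C * ediam (t k i)) := by gcongr; exact hB k i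
            _ = C * (ediam (t k i) ^ (s - 1) * ediam (t k i) ^ (1 : ℝ)) := by
                rw [ENNReal.rpow_one]; ring
            _ = _ := by
                rw [← ENNReal.rpow_add_of_nonneg _ _ (by linarith) zero_le_one, sub_add_cancel]
      _ = C * ∑' i, ediam (t k i) ^ s := ENNReal.tsum_mul_left
      _ ≤ _ := by gcongr; exact hsum k
  have hinv : Tendsto (fun k : ℕ => (k + 1 : ℝ≥0∞)⁻¹) atTop (𝓝 0) := by
    have := (tendsto_add_atTop_iff_nat 1).2 ENNReal.tendsto_inv_nat_nhds_zero
    simpa using this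
  have hlim : ∫⁻ w, liminf (fun k => f k w) atTop = 0 := by
    refine le_antisymm ((lintegral_liminf_le hfm).trans ?_) bot_le
    have h0 : Tendsto (fun k : ℕ => C * (k + 1 : ℝ≥0∞)⁻¹) atTop (𝓝 0) := by
      simpa using ENNReal.Tendsto.const_mul hinv (Or.inr hC)
    exact (liminf_le_liminf (Eventually.of_forall hfint)).trans h0.liminf_eq.le
  rw [lintegral_eq_zero_iff (Measurable.liminf hfm)] at hlim
  filter_upwards [hlim] with w hw hwR
  refine le_antisymm (le_trans ?_ hw.le) bot_le
  refine (Measure.hausdorffMeasure_le_liminf_tsum (s - 1) _ _ hinv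
    (fun k i => t k i ∩ (A ∩ {y | ⟪y - x, w⟫ = 0}))
    (Eventually.of_forall fun k i => (ediam_mono inter_subset_left).trans (htd k i))
    (Eventually.of_forall fun k y hy => ?_)).trans
    (liminf_le_liminf (Eventually.of_forall fun k => ENNReal.tsum_le_tsum fun i => ?_))
  · obtain ⟨i, hi⟩ := mem_iUnion.1 (htA k hy.1)
    exact mem_iUnion.2 ⟨i, hi, hy⟩
  · rcases (t k i ∩ (A ∩ {y | ⟪y - x, w⟫ = 0})).eq_empty_or_nonempty with h | ⟨y, hyt, hyA, hyw⟩
    · simp [h, hs]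
    · rw [indicator_of_mem (subset_toMeasurable _ (B k i) ⟨hwR, y, ⟨hyt, hyA⟩, hyw⟩)]
      exact ENNReal.rpow_le_rpow (ediam_mono inter_subset_left) (by linarith)

theorem ae_dimH_inter_hyperplane_le {m : ℕ} (x : EuclideanSpace ℝ (Fin (m + 1))) {s : ℝ≥0}
    (hs : 1 < s) (A : Set (EuclideanSpace ℝ (Fin (m + 1)))) (hA : dimH A < s) :
    ∀ᵐ w ∂(volume : Measure (EuclideanSpace ℝ (Fin (m + 1)))),
      dimH (A ∩ {y | ⟪y - x, w⟫ = 0}) ≤ (s - 1 : ℝ≥0) := by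
  have hs' : (1 : ℝ) < s := by exact_mod_cast hs
  have hA0 : μH[s] A = 0 := hausdorffMeasure_of_dimH_lt hA
  have key : ∀ᵐ w ∂(volume : Measure (EuclideanSpace ℝ (Fin (m + 1)))), ∀ R k : ℕ, ‖w‖ ≤ R →
      μH[(s : ℝ) - 1] ((A ∩ {y | 1 / ((k : ℝ) + 1) ≤ ‖y - x‖}) ∩ {y | ⟪y - x, w⟫ = 0}) = 0 :=
    ae_all_iff.2 fun R => ae_all_iff.2 fun k =>
      ae_hausdorffMeasure_inter_hyperplane_eq_zero x (by positivity) R.cast_nonneg hs' _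
        (fun y hy => hy.2) (measure_mono_null inter_subset_left hA0)
  filter_upwards [key] with w hw
  obtain ⟨R, hR⟩ := exists_nat_ge ‖w‖
  have hsub : A ∩ {y | ⟪y - x, w⟫ = 0} ⊆ {x} ∪
      ⋃ k : ℕ, (A ∩ {y | 1 / ((k : ℝ) + 1) ≤ ‖y - x‖}) ∩ {y | ⟪y - x, w⟫ = 0} := by
    rintro y ⟨hyA, hyw⟩
    rcases eq_or_ne y x with rfl | hne
    · exact Or.inl rfl
    · obtain ⟨k, hk⟩ := exists_nat_one_div_lt (norm_pos_iff.2 (sub_ne_zero.2 hne))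
      exact Or.inr (mem_iUnion.2 ⟨k, ⟨hyA, hk.le⟩, hyw⟩)
  refine (dimH_mono hsub).trans ?_
  rw [dimH_union, dimH_singleton, dimH_iUnion]
  refine max_le bot_le (iSup_le fun k => dimH_le_of_hausdorffMeasure_ne_top ?_)
  rw [NNReal.coe_sub hs.le, NNReal.coe_one, hw R k hR]
  exact ENNReal.zero_ne_top

theorem norm_inv_norm_smul_sub_le {E : Type*} [NormedAddCommGroup E] [NormedSpace ℝ E] {r : ℝ}
    (hr : 0 < r) {a b : E} (ha : r ≤ ‖a‖) (hb : r ≤ ‖b‖) :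
    ‖‖a‖⁻¹ • a - ‖b‖⁻¹ • b‖ ≤ 2 / r * ‖a - b‖ := by
  have ha0 := hr.trans_le ha
  have hb0 := hr.trans_le hb
  have h : ‖a‖⁻¹ • a - ‖b‖⁻¹ • b = ‖a‖⁻¹ • ((a - b) + ((‖b‖ - ‖a‖) * ‖b‖⁻¹) • b) := by
    rw [sub_mul, mul_inv_cancel₀ hb0.ne', sub_smul, smul_add, smul_sub, smul_sub, smul_smul,
      smul_smul, ← mul_assoc, inv_mul_cancel₀ ha0.ne', one_mul, mul_one]
    abel
  rw [h, norm_smul, norm_inv, norm_norm]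
  have h2 : ‖(a - b) + ((‖b‖ - ‖a‖) * ‖b‖⁻¹) • b‖ ≤ 2 * ‖a - b‖ := by
    refine (norm_add_le _ _).trans ?_
    rw [norm_smul, norm_mul, norm_inv, norm_norm, mul_assoc, inv_mul_cancel₀ hb0.ne', mul_one,
      Real.norm_eq_abs, two_mul]
    gcongr
    rw [norm_sub_rev a b]
    exact abs_norm_sub_norm_le b a
  calc _ ≤ r⁻¹ * (2 * ‖a - b‖) := by gcongr
    _ = _ := by ring

/-- The trace on the unit sphere of a Lebesgue-null cone is null for the `m`-dimensional
Hausdorff measure. -/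
theorem hausdorffMeasure_sphere_inter_cone_eq_zero {m : ℕ}
    {G : Set (EuclideanSpace ℝ (Fin (m + 1)))} (hG : volume G = 0)
    (hcone : ∀ c : ℝ, c ≠ 0 → ∀ w ∈ G, c • w ∈ G) :
    μH[(m : ℝ)] (G ∩ sphere 0 1) = 0 := by
  have hpiece (i : Fin (m + 1)) : μH[(m : ℝ)] (G ∩ sphere 0 1 ∩ {e | e i ≠ 0}) = 0 := by
    let ins (t : ℝ) (u : Fin m → ℝ) : EuclideanSpace ℝ (Fin (m + 1)) :=
      WithLp.toLp 2 (i.insertNth t u : Fin (m + 1) → ℝ)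
    have hae : ∀ᵐ w ∂(volume : Measure (EuclideanSpace ℝ (Fin (m + 1)))), w ∉ G :=
      measure_eq_zero_iff_ae_notMem.1 hG
    have hf := (PiLp.volume_preserving_toLp (Fin (m + 1))).comp
      (volume_preserving_piFinSuccAbove (fun _ : Fin (m + 1) => ℝ) i).symm
    have hprod : ∀ᵐ p ∂((volume : Measure ℝ).prod (volume : Measure (Fin m → ℝ))),
        ins p.1 p.2 ∉ G := hf.quasiMeasurePreserving.ae hae
    obtain ⟨t, ht, ht0⟩ := ((Measure.ae_ae_of_ae_prod hprod).and
      (measure_eq_zero_iff_ae_notMem.1 (measure_singleton (0 : ℝ)))).exists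
    have ht0 : t ≠ 0 := ht0
    have htpos : 0 < |t| := abs_pos.2 ht0
    let N : Set (Fin m → ℝ) := {u | ins t u ∈ G}
    have hN : μH[(m : ℝ)] N = 0 := by
      have := hausdorffMeasure_pi_real (ι := Fin m)
      rw [Fintype.card_fin] at this
      rw [this]
      exact measure_eq_zero_iff_ae_notMem.2 ht
    have hnorm (u : Fin m → ℝ) : |t| ≤ ‖ins t u‖ := by
      simpa [ins] using PiLp.norm_apply_le (ins t u) i
    obtain ⟨K, hK⟩ : ∃ K, LipschitzWith K (ins t) := by
      refine ⟨_, (PiLp.lipschitzWith_toLp 2 (fun _ : Fin (m + 1) => ℝ)).comp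
        (LipschitzWith.of_dist_le_mul (K := 1) fun u v => ?_)⟩
      rw [NNReal.coe_one, one_mul]
      refine (dist_pi_le_iff dist_nonneg).2 fun j => ?_
      refine Fin.succAboveCases i ?_ (fun l => ?_) j
      · simp
      · simpa using dist_le_pi_dist u v l
    have hF (c : ℝ) : μH[(m : ℝ)] ((fun u => c • ‖ins t u‖⁻¹ • ins t u) '' N) = 0 := by
      have hL : LipschitzWith (‖c‖₊ * (Real.toNNReal (2 / |t|) * K))
          (fun u => c • ‖ins t u‖⁻¹ • ins t u) := by
        refine (lipschitzWith_smul c).comp (LipschitzWith.of_dist_le_mul fun u v => ?_)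
        rw [dist_eq_norm]
        refine (norm_inv_norm_smul_sub_le htpos (hnorm u) (hnorm v)).trans ?_
        rw [NNReal.coe_mul, Real.coe_toNNReal _ (by positivity), mul_assoc, ← dist_eq_norm]
        gcongr
        exact hK.dist_le_mul u v
      refine le_antisymm ((hL.hausdorffMeasure_image_le m.cast_nonneg N).trans ?_) bot_le
      rw [hN, mul_zero]
    refine measure_mono_null ?_ (measure_union_null (hF 1) (hF (-1)))
    rintro e ⟨⟨heG, heS⟩, hei⟩
    have hei : e i ≠ 0 := hei
    have he1 : ‖e‖ = 1 := by simpa using heS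
    let u : Fin m → ℝ := fun l => t / e i * e (i.succAbove l)
    have hu : ins t u = (t / e i) • e := by
      ext j
      refine Fin.succAboveCases i ?_ (fun l => ?_) j
      · simp [ins, hei]
      · simp [ins, u]
    have huN : u ∈ N := by
      change ins t u ∈ G
      rw [hu]
      exact hcone _ (div_ne_zero ht0 hei) e heG
    have hval : ‖ins t u‖⁻¹ • ins t u = (|t / e i|⁻¹ * (t / e i)) • e := by
      rw [hu, norm_smul, he1, mul_one, smul_smul, Real.norm_eq_abs]
    rcases (div_ne_zero ht0 hei).lt_or_gt with h | h
    · refine Or.inr ⟨u, huN, ?_⟩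
      simp only
      rw [hval, abs_of_neg h, inv_neg, neg_mul, inv_mul_cancel₀ h.ne]
      simp
    · refine Or.inl ⟨u, huN, ?_⟩
      simp only
      rw [hval, abs_of_pos h, inv_mul_cancel₀ h.ne']
      simp
  refine measure_mono_null ?_ (measure_iUnion_null hpiece)
  intro e he
  have he0 : e ≠ 0 := ne_zero_of_mem_unit_sphere ⟨e, he.2⟩
  by_contra hcon
  refine he0 ?_
  ext i
  by_contra hi
  exact hcon (mem_iUnion.2 ⟨i, he, hi⟩)

theorem stmt_12 (n : ℕ) (hn : 2 ≤ n)
    (A : Set (EuclideanSpace ℝ (Fin n))) (hA : MeasurableSet A)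
    (hdA : 1 < dimH A) (x : EuclideanSpace ℝ (Fin n)) :
    ∀ᵐ e ∂(μH[(n : ℝ) - 1].restrict (sphere (0 : EuclideanSpace ℝ (Fin n)) 1)),
      dimH (A ∩ {y | ⟪y - x, e⟫ = 0}) ≤ dimH A - 1 := by
  obtain ⟨m, rfl⟩ : ∃ m, n = m + 1 := ⟨n - 1, by omega⟩
  rw [Nat.cast_add, Nat.cast_one, add_sub_cancel_right]
  have key : ∀ᵐ e ∂(μH[(m : ℝ)].restrict (sphere (0 : EuclideanSpace ℝ (Fin (m + 1))) 1)),
      ∀ q : ℚ, dimH A < Real.toNNReal q →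
        dimH (A ∩ {y | ⟪y - x, e⟫ = 0}) ≤ (Real.toNNReal q - 1 : ℝ≥0) := by
    rw [ae_all_iff]
    intro q
    rw [eventually_imp_distrib_left]
    intro hq
    have hq1 : 1 < Real.toNNReal q := by exact_mod_cast hdA.trans hq
    rw [ae_iff, Measure.restrict_apply₀' isClosed_sphere.measurableSet.nullMeasurableSet]
    refine hausdorffMeasure_sphere_inter_cone_eq_zero
      (ae_iff.1 (ae_dimH_inter_hyperplane_le x hq1 A hq)) fun c hc w hw => ?_
    simpa [real_inner_smul_right, hc] using hw
  filter_upwards [key] with e he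
  refine ENNReal.le_sub_of_add_le_right ENNReal.one_ne_top (le_of_not_gt fun hlt => ?_)
  obtain ⟨q, -, hq1, hq2⟩ := ENNReal.lt_iff_exists_rat_btwn.1 hlt
  refine hq2.not_ge ?_
  calc _ ≤ ((Real.toNNReal q - 1 : ℝ≥0) : ℝ≥0∞) + 1 := by gcongr; exact he q hq1
    _ = _ := by
      rw [ENNReal.coe_sub, ENNReal.coe_one]
      exact tsub_add_cancel_of_le (hdA.trans hq1).le
end
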